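/- Let I, d, K, J be positive integers, let X ⊆ {0,1}^I × ℝ^d be nonempty, let g : {0,1}^I × ℝ^d → ℝ, let Q : {0,1}^I × {1,…,K} → ℝ, let λ ∈ [0,1], risk level α ∈ (0,1), and γ, η ∈ ℝ. Let ξ¹,…,ξ^K ∈ ℝ^J and μ : {0,1}^I → ℝ^J, S : {0,1}^I → ℝ^{J×J} with S(x) symmetric positive definite for all x; for x ∈ {0,1}^I set P₃(x) = {p ∈ ℝ^K : p ≥ 0, Σ_k p_k = 1, (Σ_k p_k ξᵏ − μ(x))ᵀ S(x)⁻¹ (Σ_k p_k ξᵏ − μ(x)) ≤ γ, η S(x) − Σ_k p_k (ξᵏ − μ(x))(ξᵏ − μ(x))ᵀ ⪰ 0} and Q(p) = {q ∈ ℝ^K : 0 ≤ q_k ≤ p_k λ/(1−α), Σ_k q_k = λ}. Assume the Slater condition: for every x in the projection X̂ there exists p ∈ ℝ^K with p ≥ 0, Σ_k p_k = 1, strict inequality in the ellipsoid constraint, and η S(x) − Σ_k p_k (ξᵏ − μ(x))(ξᵏ − μ(x))ᵀ positive definite. Then inf over (x,y) ∈ X of [ g(x,y) + sup { (1−λ)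 Σ_k p_k Q(x,k) + Σ_k q_k Q(x,k) : p ∈ P₃(x), q ∈ Q(p) } ] equals inf of g(x,y) − λ θ + s + S(x) • z₁ − 2 μ(x)ᵀ z₂ + γ z₃ + η (S(x) • Y) over all (x,y) ∈ X, θ, s ∈ ℝ, z₁ ∈ ℝ^{J×J}, z₂ ∈ ℝ^J, z₃ ∈ ℝ, Y ∈ ℝ^{J×J}, π ∈ ℝ^K with π ≥ 0, subject to: the block matrix Z = [[z₁, z₂],[z₂ᵀ, z₃]] is positive semidefinite, Y is positive semidefinite, s − 2 z₂ᵀ ξᵏ + ((ξᵏ − μ(x))(ξᵏ − μ(x))ᵀ) • Y − (λ/(1−α)) π_k ≥ (1−λ) Q(x,k) for all k, and π_k − θ ≥ Q(x,k) for all k. -/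

import Mathlib

open scoped BigOperators
open Matrix

/-- Frobenius inner product `A • B = trace(Aᵀ B) = Σᵢⱼ Aᵢⱼ Bᵢⱼ`. -/
def frob {n : Type*} [Fintype n] (A B : Matrix n n ℝ) : ℝ := ∑ i, ∑ j, A i j * B i j

/-- The block matrix `Z = [[z₁, z₂], [z₂ᵀ, z₃]]`. -/
def blockMat {J : ℕ} (z₁ : Matrix (Fin J) (Fin J) ℝ) (z₂ : Fin J → ℝ) (z₃ : ℝ) :
    Matrix (Fin J ⊕ Unit) (Fin J ⊕ Unit) ℝ :=
  Matrix.fromBlocks z₁ (Matrix.of fun i _ => z₂ i) (Matrix.of fun _ j => z₂ j)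
    (Matrix.of fun _ _ => z₃)

/-- Type 3 (general moment-based) ambiguity set with finite support. -/
def Type3Set (K J : ℕ) (ξ : Fin K → Fin J → ℝ) (μ : Fin J → ℝ)
    (S : Matrix (Fin J) (Fin J) ℝ) (γ η : ℝ) : Set (Fin K → ℝ) :=
  {p | (∀ k, 0 ≤ p k) ∧ (∑ k, p k) = 1 ∧
    (fun j => (∑ k, p k * ξ k j) - μ j) ⬝ᵥ (S⁻¹ *ᵥ fun j => (∑ k, p k * ξ k j) - μ j) ≤ γ ∧
    (η • S -
      ∑ k, p k • Matrix.vecMulVec (fun j => ξ k j - μ j) (fun j => ξ k j - μ j)).PosSemidef}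

/-- CVaR-multiplier set `Q(p) = {q : 0 ≤ q_k ≤ p_k λ/(1−α), Σ_k q_k = λ}`. -/
def CVaRSet (K : ℕ) (lam alp : ℝ) (p : Fin K → ℝ) : Set (Fin K → ℝ) :=
  {q | (∀ k, 0 ≤ q k ∧ q k ≤ p k * (lam / (1 - alp))) ∧ (∑ k, q k) = lam}


lemma frob_nonneg {n : Type*} [Fintype n] {A B : Matrix n n ℝ} (hA : A.PosSemidef)
    (hB : B.PosSemidef) : 0 ≤ frob A B := by
  have h := (hA.hadamard hB).dotProduct_mulVec_nonneg (fun _ => 1)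
  simpa [frob, dotProduct, mulVec] using h

/-- Quadratic form nonnegativity without symmetry. -/
def QN {n : Type*} [Fintype n] (M : Matrix n n ℝ) : Prop := ∀ x : n → ℝ, 0 ≤ x ⬝ᵥ (M *ᵥ x)

lemma QN.of_psd {n : Type*} [Fintype n] {M : Matrix n n ℝ} (h : M.PosSemidef) : QN M := by
  intro x
  simpa using h.dotProduct_mulVec_nonneg x

lemma QN.psd {n : Type*} [Fintype n] {M : Matrix n n ℝ} (h : QN M) (hs : M.IsHermitian) :
    M.PosSemidef :=
  .of_dotProduct_mulVec_nonneg hs (fun x => by simpa using h x)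

lemma frob_add_left {n : Type*} [Fintype n] (A B C : Matrix n n ℝ) :
    frob (A + B) C = frob A C + frob B C := by
  simp [frob, add_mul, Finset.sum_add_distrib]

lemma frob_smul_left {n : Type*} [Fintype n] (a : ℝ) (A C : Matrix n n ℝ) :
    frob (a • A) C = a * frob A C := by
  simp [frob, Finset.mul_sum, mul_assoc]

lemma frob_sub_left {n : Type*} [Fintype n] (A B C : Matrix n n ℝ) :
    frob (A - B) C = frob A C - frob B C := by
  simp [frob, sub_mul, Finset.sum_sub_distrib]

lemma frob_sum_left {n ι : Type*} [Fintype n] (s : Finset ι) (A : ι → Matrix n n ℝ)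
    (C : Matrix n n ℝ) : frob (∑ k ∈ s, A k) C = ∑ k ∈ s, frob (A k) C := by
  classical
  induction s using Finset.induction_on with
  | empty => simp [frob]
  | insert a s ha ih => rw [Finset.sum_insert ha, Finset.sum_insert ha, frob_add_left, ih]

lemma frob_vecMulVec {n : Type*} [Fintype n] (x : n → ℝ) (Z : Matrix n n ℝ) :
    frob (vecMulVec x x) Z = x ⬝ᵥ (Z *ᵥ x) := by
  simp only [frob, vecMulVec_apply, dotProduct, mulVec, Finset.mul_sum]
  exact Finset.sum_congr rfl fun i _ => Finset.sum_congr rfl fun j _ => by ring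

lemma rep {n : Type*} [Fintype n] (f : Matrix n n ℝ →ₗ[ℝ] ℝ)
    (hf : ∀ M, QN M → 0 ≤ f M) :
    ∃ Z : Matrix n n ℝ, Z.PosSemidef ∧ ∀ M : Matrix n n ℝ, M.IsHermitian → f M = frob M Z := by
  classical
  let R : Matrix n n ℝ := Matrix.of fun i j => f (Matrix.single i j 1)
  have hR : ∀ M, f M = frob M R := by
    intro M
    conv_lhs => rw [Matrix.matrix_eq_sum_single M]
    simp only [map_sum, frob]
    refine Finset.sum_congr rfl fun i _ => Finset.sum_congr rfl fun j _ => ?_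
    have : Matrix.single i j (M i j) = M i j • Matrix.single i j (1 : ℝ) := by
      simp [Matrix.smul_single]
    rw [this, map_smul]; rfl
  have hT : ∀ M : Matrix n n ℝ, M.IsHermitian → frob M Rᵀ = frob M R := by
    intro M hM
    simp only [frob]
    rw [Finset.sum_comm]
    refine Finset.sum_congr rfl fun i _ => Finset.sum_congr rfl fun j _ => ?_
    have := hM.apply i j
    simp at this
    rw [Matrix.transpose_apply, this]
  have hZ : ∀ M : Matrix n n ℝ, M.IsHermitian → f M = frob M ((1/2 : ℝ) • (R + Rᵀ)) := by
    intro M hM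
    have h2 : frob M ((1/2 : ℝ) • (R + Rᵀ)) = (1/2) * (frob M R + frob M Rᵀ) := by
      simp only [frob, ← Finset.sum_add_distrib, Finset.mul_sum]
      refine Finset.sum_congr rfl fun i _ => Finset.sum_congr rfl fun j _ => ?_
      simp; ring
    rw [h2, hT M hM, hR]; ring
  refine ⟨(1/2 : ℝ) • (R + Rᵀ), ?_, hZ⟩
  apply QN.psd
  · intro x
    rw [← frob_vecMulVec, ← hZ]
    · apply hf
      apply QN.of_psd
      simpa using posSemidef_vecMulVec_self_star x
    · have := (posSemidef_vecMulVec_self_star x).isHermitian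
      simpa using this
  · ext i j
    simp [add_comm, mul_add]

lemma nbhd {n : Type*} [Fintype n] (G : Matrix n n ℝ)
    (hG : ∀ x : n → ℝ, x ≠ 0 → 0 < x ⬝ᵥ (G *ᵥ x)) :
    ∀ᶠ M in nhds (0 : Matrix n n ℝ), QN (G - M) := by
  have hc : IsCompact (Metric.sphere (0 : n → ℝ) 1) := isCompact_sphere _ _
  have hcont : Continuous fun q : Matrix n n ℝ × (n → ℝ) => q.2 ⬝ᵥ ((G - q.1) *ᵥ q.2) := by
    fun_prop
  have h1 : ∀ᶠ M in nhds (0 : Matrix n n ℝ), ∀ x ∈ Metric.sphere (0 : n → ℝ) 1,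
      0 < x ⬝ᵥ ((G - M) *ᵥ x) := by
    apply hc.eventually_forall_of_forall_eventually
    intro x hx
    apply hcont.continuousAt.eventually (lt_mem_nhds _)
    simp only [sub_zero]
    apply hG
    rintro rfl
    simp at hx
  filter_upwards [h1] with M hM x
  by_cases hx : x = 0
  · simp [hx]
  have hn : 0 < ‖x‖ := norm_pos_iff.mpr hx
  have := hM (‖x‖⁻¹ • x) (by simp [norm_smul, hn.ne'])
  rw [mulVec_smul, smul_dotProduct, dotProduct_smul, smul_eq_mul, smul_eq_mul] at this
  have h3 : 0 < ‖x‖⁻¹ := inv_pos.mpr hn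
  exact (pos_of_mul_pos_right (pos_of_mul_pos_right this h3.le) h3.le).le

lemma QN.comb {n : Type*} [Fintype n] {M N : Matrix n n ℝ} (hM : QN M) (hN : QN N) {a b : ℝ}
    (ha : 0 ≤ a) (hb : 0 ≤ b) : QN (a • M + b • N) := by
  intro x
  simp only [add_mulVec, smul_mulVec, dotProduct_add, dotProduct_smul, smul_eq_mul]
  have := mul_nonneg ha (hM x)
  have := mul_nonneg hb (hN x)
  linarith

lemma separation {E n m : Type*} [AddCommGroup E] [Module ℝ E] [Fintype n] [Fintype m]
    (C : Set E) (hC : Convex ℝ C) (obj U : E → ℝ) (G1 : E → Matrix n n ℝ) (G2 : E → Matrix m m ℝ)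
    (hobj : ∀ x y a b, a + b = (1 : ℝ) → obj (a • x + b • y) = a * obj x + b * obj y)
    (hU : ∀ x y a b, a + b = (1 : ℝ) → U (a • x + b • y) = a * U x + b * U y)
    (hG1 : ∀ x y a b, a + b = (1 : ℝ) → G1 (a • x + b • y) = a • G1 x + b • G1 y)
    (hG2 : ∀ x y a b, a + b = (1 : ℝ) → G2 (a • x + b • y) = a • G2 x + b • G2 y)
    (V : ℝ) (hV : ∀ x ∈ C, U x = 0 → QN (G1 x) → QN (G2 x) → obj x ≤ V)
    (G10 : Matrix n n ℝ) (G20 : Matrix m m ℝ)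
    (h10 : ∀ x : n → ℝ, x ≠ 0 → 0 < x ⬝ᵥ (G10 *ᵥ x))
    (h20 : ∀ x : m → ℝ, x ≠ 0 → 0 < x ⬝ᵥ (G20 *ᵥ x))
    (t0 : ℝ)
    (hsl : ∀ᶠ u in nhds (0 : ℝ), ∃ x ∈ C, U x = u ∧ G1 x = G10 ∧ G2 x = G20 ∧ t0 ≤ obj x) :
    ∃ θ : ℝ, ∃ Z1 : Matrix n n ℝ, ∃ Z2 : Matrix m m ℝ, Z1.PosSemidef ∧ Z2.PosSemidef ∧
      ∀ x ∈ C, (G1 x).IsHermitian → (G2 x).IsHermitian →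
        obj x + θ * U x + frob (G1 x) Z1 + frob (G2 x) Z2 ≤ V := by
  let A : Set (ℝ × ℝ × Matrix n n ℝ × Matrix m m ℝ) :=
    {w | ∃ x ∈ C, w.1 < obj x ∧ w.2.1 = U x ∧ QN (G1 x - w.2.2.1) ∧ QN (G2 x - w.2.2.2)}
  have hA : Convex ℝ A := by
    rintro w ⟨x, hx, h1, h2, h3, h4⟩ w' ⟨x', hx', h1', h2', h3', h4'⟩ a b ha hb hab
    refine ⟨a • x + b • x', hC hx hx' ha hb hab, ?_, ?_, ?_, ?_⟩
    · rw [hobj _ _ _ _ hab]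
      simp only [Prod.fst_add, Prod.smul_fst, smul_eq_mul]
      rcases ha.eq_or_lt with rfl | ha'
      · have : b = 1 := by linarith
        subst this; simpa using h1'
      · have := mul_lt_mul_of_pos_left h1 ha'
        have := mul_le_mul_of_nonneg_left h1'.le hb
        linarith
    · rw [hU _ _ _ _ hab]; simp [h2, h2']
    · rw [hG1 _ _ _ _ hab]
      convert h3.comb h3' ha hb using 1
      simp only [Prod.snd_add, Prod.fst_add, Prod.smul_fst, Prod.smul_snd, smul_sub]; abel
    · rw [hG2 _ _ _ _ hab]
      convert h4.comb h4' ha hb using 1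
      simp only [Prod.snd_add, Prod.smul_snd, smul_sub]; abel
  set t1 : ℝ := min t0 V - 1 with ht1
  have hint : ((t1, 0, 0, 0) : ℝ × ℝ × Matrix n n ℝ × Matrix m m ℝ) ∈ interior A := by
    rw [mem_interior_iff_mem_nhds]
    have e1 : ∀ᶠ t in nhds t1, t < t0 := gt_mem_nhds (by
      have := min_le_left t0 V; linarith)
    have := e1.prod_nhds (hsl.prod_nhds ((nbhd G10 h10).prod_nhds (nbhd G20 h20)))
    filter_upwards [this]
    rintro ⟨t, u, M, N⟩ ⟨k1, ⟨x, hx, k2, k3, k4, k5⟩, k6, k7⟩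
    refine ⟨x, hx, lt_of_lt_of_le k1 k5, k2.symm, ?_, ?_⟩
    · simpa only [k3] using k6
    · simpa only [k4] using k7
  have hnot : ((V, 0, 0, 0) : ℝ × ℝ × Matrix n n ℝ × Matrix m m ℝ) ∉ interior A := by
    intro h
    obtain ⟨x, hx, h1, h2, h3, h4⟩ := interior_subset h
    simp only [sub_zero] at h1 h2 h3 h4
    have := hV x hx h2.symm h3 h4
    linarith
  obtain ⟨f, hf⟩ := geometric_hahn_banach_open_point hA.interior isOpen_interior hnot
  have hfA : ∀ a ∈ A, f a ≤ f (V, 0, 0, 0) := by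
    intro a ha
    apply closure_minimal (fun x hx => le_of_lt (hf x hx)) (isClosed_Iic.preimage f.continuous)
    rw [hA.closure_interior_eq_closure_of_nonempty_interior ⟨_, hint⟩]
    exact subset_closure ha
  set τ := f (1, 0, 0, 0) with hτ
  have hft : ∀ t : ℝ, f (t, 0, 0, 0) = t * τ := by
    intro t
    rw [hτ, ← smul_eq_mul, ← map_smul]; simp
  have hτpos : 0 < τ := by
    have := hf _ hint
    rw [hft, hft] at this
    have : t1 < V := by have := min_le_right t0 V; linarith
    nlinarith
  let ι1 : Matrix n n ℝ →ₗ[ℝ] ℝ × ℝ × Matrix n n ℝ × Matrix m m ℝ :=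
    LinearMap.inr ℝ _ _ ∘ₗ LinearMap.inr ℝ _ _ ∘ₗ LinearMap.inl ℝ _ _
  let ι2 : Matrix m m ℝ →ₗ[ℝ] ℝ × ℝ × Matrix n n ℝ × Matrix m m ℝ :=
    LinearMap.inr ℝ _ _ ∘ₗ LinearMap.inr ℝ _ _ ∘ₗ LinearMap.inr ℝ _ _
  have hsplit : ∀ t u M N, f (t, u, M, N) = t * τ + u * f (0, 1, 0, 0) + f (ι1 M) + f (ι2 N) := by
    intro t u M N
    rw [← hft, ← smul_eq_mul u, ← map_smul, ← map_add, ← map_add, ← map_add]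
    simp [ι1, ι2]
  obtain ⟨x0, hx0, k2, k3, k4, k5⟩ := hsl.self_of_nhds
  have key : ∀ r : ℝ, ∀ b c : ℝ, (∀ s : ℝ, 0 ≤ s → b - s * r ≤ c) → 0 ≤ r := by
    intro r b c h
    by_contra hr
    push Not at hr
    have hr' : 0 < -r := by linarith
    have h1 := h ((|c - b| + 1) / (-r)) (by positivity)
    have h2 : (|c - b| + 1) / (-r) * r = -(|c - b| + 1) := by
      rw [div_neg, neg_mul, div_mul_cancel₀ _ hr.ne]
    have := le_abs_self (c - b)
    linarith
  have hp1 : ∀ M, QN M → 0 ≤ f (ι1 M) := by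
    intro M hM
    apply key _ ((obj x0 - 1) * τ + U x0 * f (0,1,0,0) + f (ι1 (G1 x0)) + f (ι2 (G2 x0)))
      (f (V, 0, 0, 0))
    intro s hs
    have := hfA (obj x0 - 1, U x0, G1 x0 - s • M, G2 x0) ⟨x0, hx0, by simp, rfl, by
      intro y
      simpa [smul_mulVec] using mul_nonneg hs (hM y), by intro y; simp⟩
    rw [hsplit, map_sub, map_smul, map_sub, map_smul, smul_eq_mul] at this
    linarith
  have hp2 : ∀ M, QN M → 0 ≤ f (ι2 M) := by
    intro M hM
    apply key _ ((obj x0 - 1) * τ + U x0 * f (0,1,0,0) + f (ι1 (G1 x0)) + f (ι2 (G2 x0)))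
      (f (V, 0, 0, 0))
    intro s hs
    have := hfA (obj x0 - 1, U x0, G1 x0, G2 x0 - s • M) ⟨x0, hx0, by simp, rfl,
      by intro y; simp, by
      intro y
      simpa [smul_mulVec] using mul_nonneg hs (hM y)⟩
    rw [hsplit, map_sub, map_smul, map_sub, map_smul, smul_eq_mul] at this
    linarith
  obtain ⟨Z1, hZ1, hZ1'⟩ := rep (τ⁻¹ • (f.toLinearMap ∘ₗ ι1)) (fun M hM => by
    have := hp1 M hM
    simp only [LinearMap.smul_apply, LinearMap.comp_apply, smul_eq_mul]
    exact mul_nonneg (inv_nonneg.mpr hτpos.le) this)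
  obtain ⟨Z2, hZ2, hZ2'⟩ := rep (τ⁻¹ • (f.toLinearMap ∘ₗ ι2)) (fun M hM => by
    have := hp2 M hM
    simp only [LinearMap.smul_apply, LinearMap.comp_apply, smul_eq_mul]
    exact mul_nonneg (inv_nonneg.mpr hτpos.le) this)
  refine ⟨τ⁻¹ * f (0,1,0,0), Z1, Z2, hZ1, hZ2, ?_⟩
  intro x hx hs1 hs2
  rw [← hZ1' _ hs1, ← hZ2' _ hs2]
  simp only [LinearMap.smul_apply, LinearMap.comp_apply, smul_eq_mul, ContinuousLinearMap.coe_coe]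
  apply le_of_forall_pos_le_add
  intro ε hε
  have := hfA (obj x - ε, U x, G1 x, G2 x) ⟨x, hx, by simpa using hε, rfl,
      by intro y; simp, by intro y; simp⟩
  rw [hsplit, hft] at this
  have h2 := mul_le_mul_of_nonneg_left this (inv_nonneg.mpr hτpos.le)
  have h3 : τ⁻¹ * τ = 1 := inv_mul_cancel₀ hτpos.ne'
  have e1 : τ⁻¹ * (V * τ) = V := by rw [mul_comm V, ← mul_assoc, h3, one_mul]
  have e2 : τ⁻¹ * ((obj x - ε) * τ) = obj x - ε := by
    rw [mul_comm (obj x - ε), ← mul_assoc, h3, one_mul]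
  rw [e1, mul_add, mul_add, mul_add, e2] at h2
  linarith

lemma blockMat_eq {J : ℕ} (S : Matrix (Fin J) (Fin J) ℝ) (v : Fin J → ℝ) (c : ℝ) :
    blockMat S v c = fromBlocks S (replicateCol Unit v) (replicateCol Unit v)ᴴ
      (of fun _ _ => c) := by
  ext i j
  rcases i with i | i <;> rcases j with j | j <;> simp [blockMat]

lemma schur {J : ℕ} {S : Matrix (Fin J) (Fin J) ℝ} (hS : S.PosDef) (v : Fin J → ℝ) (c : ℝ) :
    (blockMat S v c).PosSemidef ↔ v ⬝ᵥ (S⁻¹ *ᵥ v) ≤ c := by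
  have := hS.isUnit.invertible
  rw [blockMat_eq, hS.fromBlocks₁₁]
  have : (of fun (_ _ : Unit) => c) - (replicateCol Unit v)ᴴ * S⁻¹ * replicateCol Unit v
      = diagonal (fun _ => c - v ⬝ᵥ (S⁻¹ *ᵥ v)) := by
    ext i j
    rw [Matrix.mul_assoc]
    simp [Matrix.mul_apply, dotProduct, mulVec]
  rw [this, posSemidef_diagonal_iff]
  simp

lemma blockMat_isHermitian {J : ℕ} {S : Matrix (Fin J) (Fin J) ℝ} (hS : S.IsHermitian)
    (v : Fin J → ℝ) (c : ℝ) : (blockMat S v c).IsHermitian := by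
  ext i j
  rcases i with i | i <;> rcases j with j | j <;> simp [blockMat]
  simpa using hS.apply i j

lemma blockMat_quad {J : ℕ} (S : Matrix (Fin J) (Fin J) ℝ) (v : Fin J → ℝ) (c : ℝ)
    (x : Fin J ⊕ Unit → ℝ) :
    x ⬝ᵥ (blockMat S v c *ᵥ x) = (x ∘ Sum.inl) ⬝ᵥ (S *ᵥ (x ∘ Sum.inl))
      + 2 * (v ⬝ᵥ (x ∘ Sum.inl)) * x (Sum.inr ()) + c * x (Sum.inr ()) ^ 2 := by
  simp only [dotProduct, mulVec, Fintype.sum_sum_type, blockMat, Function.comp,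
    fromBlocks_apply₁₁, fromBlocks_apply₁₂, fromBlocks_apply₂₁, fromBlocks_apply₂₂, of_apply,
    Finset.univ_unique, Finset.sum_singleton, mul_add, Finset.sum_add_distrib]
  have h1 : ∑ i, x (Sum.inl i) * (v i * x (Sum.inr ())) =
      (∑ i, v i * x (Sum.inl i)) * x (Sum.inr ()) := by
    rw [Finset.sum_mul]; exact Finset.sum_congr rfl fun i _ => by ring
  have e : (default : Unit) = () := rfl
  rw [e, h1]
  ring

lemma block_pos {J : ℕ} {S : Matrix (Fin J) (Fin J) ℝ} (hS : S.PosDef) (v : Fin J → ℝ) (c : ℝ)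
    (h : v ⬝ᵥ (S⁻¹ *ᵥ v) < c) (x : Fin J ⊕ Unit → ℝ) (hx : x ≠ 0) :
    0 < x ⬝ᵥ (blockMat S v c *ᵥ x) := by
  have h0 := QN.of_psd ((schur hS v _).mpr le_rfl) x
  rw [blockMat_quad] at h0 ⊢
  by_cases hy : x (Sum.inr ()) = 0
  · have : x ∘ Sum.inl ≠ 0 := by
      intro h'
      apply hx
      ext i
      rcases i with i | i
      · exact congrFun h' i
      · exact hy
    have := hS.dotProduct_mulVec_pos this
    simp only [star_trivial] at this
    rw [hy]; simpa using this
  · have : 0 < x (Sum.inr ()) ^ 2 := by positivity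
    nlinarith

lemma frob_block {J : ℕ} (S z₁ : Matrix (Fin J) (Fin J) ℝ) (v z₂ : Fin J → ℝ) (c z₃ : ℝ) :
    frob (blockMat S v c) (blockMat z₁ z₂ z₃) = frob S z₁ + 2 * (∑ j, v j * z₂ j) + c * z₃ := by
  simp [frob, Fintype.sum_sum_type, blockMat, Finset.sum_add_distrib]
  ring

lemma exists_block {J : ℕ} {Z : Matrix (Fin J ⊕ Unit) (Fin J ⊕ Unit) ℝ} (hZ : Z.IsHermitian) :
    ∃ z₁ z₂ z₃, Z = blockMat z₁ z₂ z₃ := by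
  refine ⟨Z.toBlocks₁₁, fun j => Z (Sum.inl j) (Sum.inr ()), Z (Sum.inr ()) (Sum.inr ()), ?_⟩
  ext i j
  rcases i with i | i <;> rcases j with j | j <;> simp [blockMat, toBlocks₁₁]
  simpa using (hZ.apply (Sum.inr ()) (Sum.inl j)).symm

section main
variable {K J : ℕ}

lemma weak (ξ : Fin K → Fin J → ℝ) (μ : Fin J → ℝ) (S : Matrix (Fin J) (Fin J) ℝ)
    (hS : S.PosDef) (γ η lam alp : ℝ) (Q : Fin K → ℝ)
    {p q : Fin K → ℝ} (hp : p ∈ Type3Set K J ξ μ S γ η) (hq : q ∈ CVaRSet K lam alp p)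
    {θ s z₃ : ℝ} {z₁ Y : Matrix (Fin J) (Fin J) ℝ} {z₂ : Fin J → ℝ} {pv : Fin K → ℝ}
    (hpv : ∀ k, 0 ≤ pv k) (hZ : (blockMat z₁ z₂ z₃).PosSemidef) (hY : Y.PosSemidef)
    (h1 : ∀ k, (1 - lam) * Q k ≤ s - 2 * (∑ j, z₂ j * ξ k j) +
          frob (Matrix.vecMulVec (fun j => ξ k j - μ j) (fun j => ξ k j - μ j)) Y
          - (lam / (1 - alp)) * pv k)
    (h2 : ∀ k, Q k ≤ pv k - θ) :
    (1 - lam) * (∑ k, p k * Q k) + ∑ k, q k * Q k ≤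
      - lam * θ + s + frob S z₁ - 2 * (∑ j, μ j * z₂ j) + γ * z₃ + η * frob S Y := by
  obtain ⟨hp0, hps, hpe, hpc⟩ := hp
  obtain ⟨hq0, hqs⟩ := hq
  have a1 := frob_nonneg ((schur hS _ _).mpr hpe) hZ
  rw [frob_block] at a1
  have a2 := frob_nonneg hpc hY
  rw [frob_sub_left, frob_smul_left, frob_sum_left] at a2
  simp only [frob_smul_left] at a2
  set F := fun k => frob (Matrix.vecMulVec (fun j => ξ k j - μ j) (fun j => ξ k j - μ j)) Y
  have a3 : ∑ k, p k * ((1 - lam) * Q k) ≤ ∑ k, p k * (s - 2 * (∑ j, z₂ j * ξ k j) + F k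
      - (lam / (1 - alp)) * pv k) :=
    Finset.sum_le_sum fun k _ => mul_le_mul_of_nonneg_left (h1 k) (hp0 k)
  have a4 : ∑ k, q k * Q k ≤ ∑ k, q k * (pv k - θ) :=
    Finset.sum_le_sum fun k _ => mul_le_mul_of_nonneg_left (h2 k) (hq0 k).1
  have a5 : ∑ k, q k * pv k ≤ ∑ k, p k * (lam / (1 - alp)) * pv k :=
    Finset.sum_le_sum fun k _ => mul_le_mul_of_nonneg_right (hq0 k).2 (hpv k)
  have b1 : ∑ k, p k * ((1 - lam) * Q k) = (1 - lam) * ∑ k, p k * Q k := by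
    rw [Finset.mul_sum]; exact Finset.sum_congr rfl fun i _ => by ring
  have b2 : ∑ k, p k * (s - 2 * (∑ j, z₂ j * ξ k j) + F k - (lam / (1 - alp)) * pv k)
      = s - 2 * (∑ k, p k * ∑ j, z₂ j * ξ k j) + ∑ k, p k * F k
        - ∑ k, p k * (lam / (1 - alp)) * pv k := by
    have : s = ∑ k, p k * s := by rw [← Finset.sum_mul, hps, one_mul]
    conv_rhs => rw [this]
    rw [Finset.mul_sum, ← Finset.sum_sub_distrib, ← Finset.sum_add_distrib,
      ← Finset.sum_sub_distrib]
    exact Finset.sum_congr rfl fun i _ => by ring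
  have b3 : ∑ k, q k * (pv k - θ) = ∑ k, q k * pv k - lam * θ := by
    rw [← hqs, Finset.sum_mul, ← Finset.sum_sub_distrib]
    exact Finset.sum_congr rfl fun i _ => by ring
  have b4 : ∑ j, ((∑ k, p k * ξ k j) - μ j) * z₂ j =
      (∑ k, p k * ∑ j, z₂ j * ξ k j) - ∑ j, μ j * z₂ j := by
    simp only [sub_mul, Finset.sum_sub_distrib, Finset.sum_mul, Finset.mul_sum]
    congr 1
    rw [Finset.sum_comm]
    exact Finset.sum_congr rfl fun i _ => Finset.sum_congr rfl fun j _ => by ring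
  rw [b4] at a1
  rw [b1, b2] at a3
  rw [b3] at a4
  change 0 ≤ η * frob S Y - ∑ k, p k * F k at a2
  linarith

lemma G2_herm {S : Matrix (Fin J) (Fin J) ℝ} (hS : S.IsHermitian) (η : ℝ) (p : Fin K → ℝ)
    (w : Fin K → Fin J → ℝ) : (η • S - ∑ k, p k • vecMulVec (w k) (w k)).IsHermitian := by
  ext i j
  have := hS.apply i j
  simp only [star_trivial] at this
  simp [Matrix.sum_apply, vecMulVec_apply, this, mul_comm]

lemma strong (ξ : Fin K → Fin J → ℝ) (μ : Fin J → ℝ) (S : Matrix (Fin J) (Fin J) ℝ)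
    (hS : S.PosDef) (γ η lam alp : ℝ) (hlam0 : 0 ≤ lam)
    (halp0 : 0 < alp) (halp1 : alp < 1) (Q : Fin K → ℝ)
    (hsl : ∃ p : Fin K → ℝ, (∀ k, 0 ≤ p k) ∧ (∑ k, p k) = 1 ∧
        (fun j => (∑ k, p k * ξ k j) - μ j) ⬝ᵥ
          (S⁻¹ *ᵥ fun j => (∑ k, p k * ξ k j) - μ j) < γ ∧
        (η • S -
          ∑ k, p k • Matrix.vecMulVec (fun j => ξ k j - μ j)
            (fun j => ξ k j - μ j)).PosDef)
    (V : ℝ) (hV : ∀ p ∈ Type3Set K J ξ μ S γ η, ∀ q ∈ CVaRSet K lam alp p,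
      (1 - lam) * (∑ k, p k * Q k) + ∑ k, q k * Q k ≤ V) :
    ∃ θ s z₃ : ℝ, ∃ z₁ Y : Matrix (Fin J) (Fin J) ℝ,
        ∃ z₂ : Fin J → ℝ, ∃ pv : Fin K → ℝ,
        (∀ k, 0 ≤ pv k) ∧
        (blockMat z₁ z₂ z₃).PosSemidef ∧ Y.PosSemidef ∧
        (∀ k, (1 - lam) * Q k ≤ s - 2 * (∑ j, z₂ j * ξ k j) +
          frob (Matrix.vecMulVec (fun j => ξ k j - μ j) (fun j => ξ k j - μ j)) Y
          - (lam / (1 - alp)) * pv k) ∧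
        (∀ k, Q k ≤ pv k - θ) ∧
        V = - lam * θ + s + frob S z₁ - 2 * (∑ j, μ j * z₂ j) + γ * z₃
            + η * frob S Y := by
  classical
  obtain ⟨p0, hp0, hp1, hp2, hp3⟩ := hsl
  have hpos : 0 < 1 - alp := by linarith
  set κ : ℝ := (1 - alp)⁻¹ with hκ
  have hκ1 : 1 < κ := (one_lt_inv₀ hpos).mpr (by linarith)
  have hlκ : lam / (1 - alp) = lam * κ := div_eq_mul_inv _ _
  let w : Fin K → Fin J → ℝ := fun k j => ξ k j - μ j
  let C : Set ((Fin K → ℝ) × (Fin K → ℝ)) :=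
    {x | (∀ k, 0 ≤ x.1 k) ∧ ∑ k, x.1 k = 1 ∧ ∀ k, 0 ≤ x.2 k ∧ x.2 k ≤ κ * x.1 k}
  have hC : Convex ℝ C := by
    rintro ⟨p, r⟩ ⟨h1, h2, h3⟩ ⟨p', r'⟩ ⟨h1', h2', h3'⟩ a b ha hb hab
    refine ⟨fun k => ?_, ?_, fun k => ⟨?_, ?_⟩⟩
    · exact add_nonneg (mul_nonneg ha (h1 k)) (mul_nonneg hb (h1' k))
    · simp only [Prod.smul_mk, Prod.mk_add_mk, Pi.add_apply, Pi.smul_apply, smul_eq_mul,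
        Finset.sum_add_distrib, ← Finset.mul_sum]
      simp only at h2 h2'
      rw [h2, h2']; linarith
    · exact add_nonneg (mul_nonneg ha (h3 k).1) (mul_nonneg hb (h3' k).1)
    · have e1 := mul_le_mul_of_nonneg_left (h3 k).2 ha
      have e2 := mul_le_mul_of_nonneg_left (h3' k).2 hb
      simp only [Prod.smul_mk, Prod.mk_add_mk, Pi.add_apply, Pi.smul_apply, smul_eq_mul] at *
      linarith
  have hlin : ∀ (p p' c : Fin K → ℝ) (a b : ℝ), ∑ k, (a * p k + b * p' k) * c k =
      a * ∑ k, p k * c k + b * ∑ k, p' k * c k := by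
    intro p p' c a b
    simp only [Finset.mul_sum, ← Finset.sum_add_distrib]
    exact Finset.sum_congr rfl fun i _ => by ring
  obtain ⟨θ', Z, Y, hZ, hY, hmain⟩ := separation C hC
    (fun x => (1 - lam) * (∑ k, x.1 k * Q k) + lam * ∑ k, x.2 k * Q k)
    (fun x => (∑ k, x.2 k) - 1)
    (fun x => blockMat S (fun j => (∑ k, x.1 k * ξ k j) - μ j) γ)
    (fun x => η • S - ∑ k, x.1 k • vecMulVec (w k) (w k))
    (by
      rintro ⟨p, r⟩ ⟨p', r'⟩ a b hab
      simp only [Prod.smul_mk, Prod.mk_add_mk, Pi.add_apply, Pi.smul_apply, smul_eq_mul, hlin]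
      ring)
    (by
      rintro ⟨p, r⟩ ⟨p', r'⟩ a b hab
      simp only [Prod.smul_mk, Prod.mk_add_mk, Pi.add_apply, Pi.smul_apply, smul_eq_mul,
        Finset.sum_add_distrib, ← Finset.mul_sum]
      linear_combination (-1) * (-hab))
    (by
      rintro ⟨p, r⟩ ⟨p', r'⟩ a b hab
      simp only [Prod.smul_mk, Prod.mk_add_mk, Pi.add_apply, Pi.smul_apply, smul_eq_mul, hlin]
      ext i j
      rcases i with i | i <;> rcases j with j | j <;> simp [blockMat]
      · linear_combination (-S i j) * hab
      · linear_combination (μ i) * hab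
      · linear_combination (μ j) * hab
      · linear_combination (-γ) * hab)
    (by
      rintro ⟨p, r⟩ ⟨p', r'⟩ a b hab
      ext i j
      simp only [Prod.smul_mk, Prod.mk_add_mk, Pi.add_apply, Pi.smul_apply, smul_eq_mul,
        Matrix.sub_apply, Matrix.add_apply, Matrix.smul_apply, Matrix.sum_apply, hlin]
      linear_combination (-η * S i j) * hab)
    V
    (by
      rintro ⟨p, r⟩ ⟨h1, h2, h3⟩ hu hg1 hg2
      have hq : (fun k => lam * r k) ∈ CVaRSet K lam alp p := by
        refine ⟨fun k => ⟨mul_nonneg hlam0 (h3 k).1, ?_⟩, ?_⟩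
        · have := mul_le_mul_of_nonneg_left (h3 k).2 hlam0
          rw [hlκ]; simp only at this; linarith
        · rw [← Finset.mul_sum]
          simp only at hu
          have : ∑ k, r k = 1 := by linarith
          rw [this, mul_one]
      have := hV p ⟨h1, h2, (schur hS _ _).mp (hg1.psd (blockMat_isHermitian hS.1 _ _)),
        hg2.psd (G2_herm hS.1 _ _ _)⟩ _ hq
      simp only [mul_assoc, ← Finset.mul_sum] at this ⊢
      exact this)
    (blockMat S (fun j => (∑ k, p0 k * ξ k j) - μ j) γ)
    (η • S - ∑ k, p0 k • vecMulVec (w k) (w k))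
    (fun x hx => block_pos hS _ _ hp2 x hx)
    (fun x hx => by simpa using hp3.dotProduct_mulVec_pos hx)
    ((1 - lam) * (∑ k, p0 k * Q k) - lam * κ * |∑ k, p0 k * Q k|)
    (by
      have e1 : ∀ᶠ u in nhds (0 : ℝ), -1 < u := lt_mem_nhds (by norm_num)
      have e2 : ∀ᶠ u in nhds (0 : ℝ), u < κ - 1 := gt_mem_nhds (by linarith)
      filter_upwards [e1, e2] with u hu1 hu2
      refine ⟨(p0, fun k => (1 + u) * p0 k), ⟨hp0, hp1, fun k => ⟨?_, ?_⟩⟩, ?_, rfl, rfl, ?_⟩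
      · exact mul_nonneg (by linarith) (hp0 k)
      · exact mul_le_mul_of_nonneg_right (by linarith) (hp0 k)
      · simp only [← Finset.mul_sum, hp1]; ring
      · simp only [mul_assoc, ← Finset.mul_sum]
        set b := ∑ k, p0 k * Q k
        have h1 : -(κ * |b|) ≤ (1 + u) * b := by
          have := neg_abs_le ((1 + u) * b)
          rw [abs_mul, abs_of_nonneg (by linarith : 0 ≤ 1 + u)] at this
          have := mul_le_mul_of_nonneg_right (by linarith : 1 + u ≤ κ) (abs_nonneg b)
          linarith
        have := mul_le_mul_of_nonneg_left h1 hlam0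
        linarith)
  obtain ⟨z₁, z₂, z₃, rfl⟩ := exists_block hZ.1
  let F : Fin K → ℝ := fun k => frob (vecMulVec (w k) (w k)) Y
  have hk : ∀ (k : Fin K) (c : ℝ), 0 ≤ c → c ≤ κ →
      (1 - lam) * Q k + lam * (c * Q k) + θ' * (c - 1) + (frob S z₁ +
        2 * ((∑ j, z₂ j * ξ k j) - ∑ j, μ j * z₂ j) + γ * z₃) + (η * frob S Y - F k) ≤ V := by
    intro k c hc0 hc1
    have := hmain (Pi.single k 1, c • Pi.single k 1) ⟨fun i => ?_, ?_, fun i => ⟨?_, ?_⟩⟩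
      (blockMat_isHermitian hS.1 _ _) (G2_herm hS.1 _ _ _)
    · rw [frob_block, frob_sub_left, frob_smul_left, frob_sum_left] at this
      simp only [frob_smul_left] at this
      have e : ∑ j, (ξ k j - μ j) * z₂ j = (∑ j, z₂ j * ξ k j) - ∑ j, μ j * z₂ j := by
        rw [← Finset.sum_sub_distrib]
        exact Finset.sum_congr rfl fun i _ => by ring
      simp [Pi.single_apply, e] at this
      simp only [F]
      linarith
    · by_cases h : i = k <;> simp [Pi.single_apply, h]
    · simp
    · by_cases h : i = k <;> simp [Pi.single_apply, h, hc0]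
    · by_cases h : i = k <;> simp [Pi.single_apply, h, hc1]
  have hk0 := fun k => hk k 0 le_rfl (by linarith)
  have hkκ := fun k => hk k κ (by linarith) le_rfl
  rcases hlam0.eq_or_lt with rfl | hlam
  · refine ⟨-∑ k, |Q k|, V - frob S z₁ + 2 * (∑ j, μ j * z₂ j) - γ * z₃ - η * frob S Y, z₃, z₁, Y,
      z₂, fun _ => 0, fun _ => le_rfl, hZ, hY, fun k => ?_, fun k => ?_, by ring⟩
    · have h0 := hk k 1 zero_le_one hκ1.le
      change _ ≤ _ + F k - _
      linarith
    · have := Finset.single_le_sum (f := fun k => |Q k|) (fun i _ => abs_nonneg _)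
        (Finset.mem_univ k)
      have := le_abs_self (Q k)
      simp only at *
      linarith
  · have hθ : lam * (θ' / lam) = θ' := mul_div_cancel₀ _ hlam.ne'
    refine ⟨θ' / lam, V + θ' - frob S z₁ + 2 * (∑ j, μ j * z₂ j) - γ * z₃ - η * frob S Y, z₃, z₁, Y,
      z₂, fun k => max 0 (Q k + θ' / lam), fun _ => le_max_left _ _, hZ, hY, fun k => ?_,
      fun k => ?_, by rw [neg_mul, hθ]; ring⟩
    · change _ ≤ _ + F k - _
      have h0 := hk0 k
      have h1 := hkκ k
      rw [hlκ]
      beta_reduce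
      rcases max_choice 0 (Q k + θ' / lam) with h | h <;> rw [h]
      · linarith
      · have : lam * κ * (Q k + θ' / lam) = κ * (lam * Q k) + κ * θ' := by
          linear_combination κ * hθ
        rw [this]
        linarith
    · have := le_max_right 0 (Q k + θ' / lam)
      linarith

lemma bdd (ξ : Fin K → Fin J → ℝ) (μ : Fin J → ℝ) (S : Matrix (Fin J) (Fin J) ℝ)
    (γ η lam alp : ℝ) (hlam1 : lam ≤ 1) (Q : Fin K → ℝ) :
    BddAbove {r : ℝ | ∃ p ∈ Type3Set K J ξ μ S γ η,
          ∃ q ∈ CVaRSet K lam alp p,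
          r = (1 - lam) * (∑ k, p k * Q k) + ∑ k, q k * Q k} := by
  refine ⟨(1 - lam) * (∑ k, |Q k|) + ∑ k, lam * |Q k|, ?_⟩
  rintro r ⟨p, ⟨hp0, hps, -, -⟩, q, ⟨hq0, hqs⟩, rfl⟩
  have key : ∀ (a c : ℝ) (b : ℝ), 0 ≤ a → a ≤ c → a * b ≤ c * |b| := fun a c b h0 h1 =>
    (mul_le_mul_of_nonneg_left (le_abs_self b) h0).trans
      (mul_le_mul_of_nonneg_right h1 (abs_nonneg b))
  have h1 : ∑ k, p k * Q k ≤ ∑ k, |Q k| := by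
    refine Finset.sum_le_sum fun k _ => ?_
    have := key (p k) 1 (Q k) (hp0 k)
      (by rw [← hps]; exact Finset.single_le_sum (fun i _ => hp0 i) (Finset.mem_univ k))
    simpa using this
  have h2 : ∑ k, q k * Q k ≤ ∑ k, lam * |Q k| := by
    refine Finset.sum_le_sum fun k _ => ?_
    exact key (q k) lam (Q k) (hq0 k).1
      (by rw [← hqs]; exact Finset.single_le_sum (fun i _ => (hq0 i).1) (Finset.mem_univ k))
  have := mul_le_mul_of_nonneg_left h1 (by linarith : 0 ≤ 1 - lam)
  linarith

end main

theorem stmt10 (I d K J : ℕ) (hI : 0 < I) (hd : 0 < d) (hK : 0 < K) (hJ : 0 < J)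
    (X : Set ((Fin I → ℝ) × (Fin d → ℝ))) (hXne : X.Nonempty)
    (hXbin : ∀ z ∈ X, ∀ i, z.1 i = 0 ∨ z.1 i = 1)
    (g : (Fin I → ℝ) × (Fin d → ℝ) → ℝ)
    (Q : (Fin I → ℝ) → Fin K → ℝ)
    (lam alp : ℝ) (hlam0 : 0 ≤ lam) (hlam1 : lam ≤ 1) (halp0 : 0 < alp) (halp1 : alp < 1)
    (γ η : ℝ) (ξ : Fin K → Fin J → ℝ)
    (μ : (Fin I → ℝ) → Fin J → ℝ)
    (S : (Fin I → ℝ) → Matrix (Fin J) (Fin J) ℝ)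
    (hSpd : ∀ x : Fin I → ℝ, (S x).PosDef)
    (hslater : ∀ x : Fin I → ℝ, (∃ y, (x, y) ∈ X) →
      ∃ p : Fin K → ℝ, (∀ k, 0 ≤ p k) ∧ (∑ k, p k) = 1 ∧
        (fun j => (∑ k, p k * ξ k j) - μ x j) ⬝ᵥ
          ((S x)⁻¹ *ᵥ fun j => (∑ k, p k * ξ k j) - μ x j) < γ ∧
        (η • S x -
          ∑ k, p k • Matrix.vecMulVec (fun j => ξ k j - μ x j)
            (fun j => ξ k j - μ x j)).PosDef) :
    sInf {v : ℝ | ∃ z ∈ X,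
        v = g z + sSup {r : ℝ | ∃ p ∈ Type3Set K J ξ (μ z.1) (S z.1) γ η,
          ∃ q ∈ CVaRSet K lam alp p,
          r = (1 - lam) * (∑ k, p k * Q z.1 k) + ∑ k, q k * Q z.1 k}} =
    sInf {v : ℝ | ∃ z ∈ X, ∃ θ s z₃ : ℝ, ∃ z₁ Y : Matrix (Fin J) (Fin J) ℝ,
        ∃ z₂ : Fin J → ℝ, ∃ pv : Fin K → ℝ,
        (∀ k, 0 ≤ pv k) ∧
        (blockMat z₁ z₂ z₃).PosSemidef ∧ Y.PosSemidef ∧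
        (∀ k, (1 - lam) * Q z.1 k ≤ s - 2 * (∑ j, z₂ j * ξ k j) +
          frob (Matrix.vecMulVec (fun j => ξ k j - μ z.1 j) (fun j => ξ k j - μ z.1 j)) Y
          - (lam / (1 - alp)) * pv k) ∧
        (∀ k, Q z.1 k ≤ pv k - θ) ∧
        v = g z - lam * θ + s + frob (S z.1) z₁ - 2 * (∑ j, μ z.1 j * z₂ j) + γ * z₃
            + η * frob (S z.1) Y} := by
  have hslz : ∀ z ∈ X, _ := fun z hz => hslater z.1 ⟨z.2, hz⟩
  have hsub : ∀ L R : Set ℝ, L ⊆ R → (∀ v ∈ R, ∃ u ∈ L, u ≤ v) → sInf L = sInf R := by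
    intro L R h1 h2
    have hlb : lowerBounds L = lowerBounds R := by
      apply Set.Subset.antisymm
      · intro a ha v hv
        obtain ⟨u, hu, huv⟩ := h2 v hv
        exact (ha hu).trans huv
      · exact lowerBounds_mono_set h1
    by_cases hne : L.Nonempty
    · by_cases hb : BddBelow L
      · have g1 := isGLB_csInf hne hb
        have hb' : BddBelow R := by rw [BddBelow, ← hlb]; exact hb
        have g2 := isGLB_csInf (hne.mono h1) hb'
        rw [IsGLB, ← hlb] at g2
        exact g1.unique g2
      · have hb' : ¬ BddBelow R := by rw [BddBelow, ← hlb]; exact hb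
        rw [Real.sInf_of_not_bddBelow hb, Real.sInf_of_not_bddBelow hb']
    · have : R = ∅ := by
        by_contra h
        obtain ⟨v, hv⟩ := Set.nonempty_iff_ne_empty.mpr h
        obtain ⟨u, hu, -⟩ := h2 v hv
        exact hne ⟨u, hu⟩
      rw [this, Set.not_nonempty_iff_eq_empty.mp hne]
  apply hsub
  · rintro v ⟨z, hz, rfl⟩
    obtain ⟨θ, s, z₃, z₁, Y, z₂, pv, c1, c2, c3, c4, c5, c6⟩ :=
      strong ξ (μ z.1) (S z.1) (hSpd z.1) γ η lam alp hlam0 halp0 halp1 (Q z.1) (hslz z hz) _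
      (fun p hp q hq => le_csSup (bdd ξ (μ z.1) (S z.1) γ η lam alp hlam1 (Q z.1))
        ⟨p, hp, q, hq, rfl⟩)
    refine ⟨z, hz, θ, s, z₃, z₁, Y, z₂, pv, c1, c2, c3, c4, c5, ?_⟩
    rw [c6]; ring
  · rintro v ⟨z, hz, θ, s, z₃, z₁, Y, z₂, pv, c1, c2, c3, c4, c5, rfl⟩
    refine ⟨_, ⟨z, hz, rfl⟩, ?_⟩
    have : sSup {r : ℝ | ∃ p ∈ Type3Set K J ξ (μ z.1) (S z.1) γ η,
          ∃ q ∈ CVaRSet K lam alp p,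
          r = (1 - lam) * (∑ k, p k * Q z.1 k) + ∑ k, q k * Q z.1 k} ≤
        - lam * θ + s + frob (S z.1) z₁ - 2 * (∑ j, μ z.1 j * z₂ j) + γ * z₃
            + η * frob (S z.1) Y := by
      apply csSup_le
      · obtain ⟨p, h1, h2, h3, h4⟩ := hslz z hz
        refine ⟨_, p, ⟨h1, h2, h3.le, h4.posSemidef⟩, fun k => lam * p k,
          ⟨fun k => ⟨mul_nonneg hlam0 (h1 k), ?_⟩, ?_⟩, rfl⟩
        · rw [mul_comm]
          apply mul_le_mul_of_nonneg_right _ (h1 k)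
          rw [le_div_iff₀ (by linarith)]
          nlinarith
        · rw [← Finset.mul_sum, h2, mul_one]
      · rintro r ⟨p, hp, q, hq, rfl⟩
        exact weak ξ (μ z.1) (S z.1) (hSpd z.1) γ η lam alp (Q z.1) hp hq c1 c2 c3 c4 c5
    linarith
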